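/- arXiv:1902.03822 — 5 statements merged into one kernel-verified Lean document; each statement's English description precedes it below -/
import Mathlib

section
/- Let H be a group, let U = ⟨{t} ∪ H ∪ tHt⁻¹⟩ and V = ⟨H ∪ tHt⁻¹⟩ be the submonoids of the free product H ∗ FG(t) generated by the indicated subsets (where tHt⁻¹ = {t * h * t⁻¹ | h ∈ H}). Then V ≤ U, and U \ V is an ideal of the monoid U: U \ V is nonempty and for every u ∈ U and every z ∈ U with z ∉ V, both u * z and z * u lie in U and not in V. -/
open Monoid

/-- In the free product `H ∗ FG(t)`, let `U = ⟨{t} ∪ H ∪ tHt⁻¹⟩` and `V = ⟨H ∪ tHt⁻¹⟩`.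
Then `V ≤ U` and `U \ V` is a (nonempty) ideal of the monoid `U`. -/
theorem complement_is_ideal (H : Type) [Group H] :
    let t : Coprod H (FreeGroup Unit) := Coprod.inr (FreeGroup.of ())
    let U : Submonoid (Coprod H (FreeGroup Unit)) :=
      Submonoid.closure
        ({t} ∪ Set.range (fun h : H => Coprod.inl h) ∪
          {x | ∃ h : H, x = t * Coprod.inl h * t⁻¹})
    let V : Submonoid (Coprod H (FreeGroup Unit)) :=
      Submonoid.closure
        (Set.range (fun h : H => Coprod.inl h) ∪ {x | ∃ h : H, x = t * Coprod.inl h * t⁻¹})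
    V ≤ U ∧
    (∃ z, z ∈ U ∧ z ∉ V) ∧
    ∀ u ∈ U, ∀ z ∈ U, z ∉ V →
      u * z ∈ U ∧ u * z ∉ V ∧ z * u ∈ U ∧ z * u ∉ V := by
  intro t U V
  have hVU : V ≤ U := by
    apply Submonoid.closure_mono
    rintro x (hx | hx)
    · exact Or.inl (Or.inr hx)
    · exact Or.inr hx
  have htU : t ∈ U := Submonoid.subset_closure (Or.inl (Or.inl rfl))
  -- the exponent-sum homomorphism
  let φ : Coprod H (FreeGroup Unit) →* Multiplicative ℤ :=
    Coprod.lift 1 (FreeGroup.lift fun _ => Multiplicative.ofAdd 1)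
  have hφt : φ t = Multiplicative.ofAdd 1 := by simp [φ, t]
  have hφH : ∀ h : H, φ (Coprod.inl h) = 1 := by intro h; simp [φ]
  have hφc : ∀ h : H, φ (t * Coprod.inl h * t⁻¹) = 1 := by
    intro h
    rw [map_mul, map_mul, hφH, map_inv]
    simp
  have hlt : (1 : Multiplicative ℤ) < Multiplicative.ofAdd 1 := by decide
  have hV : ∀ x ∈ V, φ x = 1 := by
    intro x hx
    have hle : V ≤ MonoidHom.mker φ := by
      apply Submonoid.closure_le.2
      rintro y (⟨h, rfl⟩ | ⟨h, rfl⟩)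
      · exact hφH h
      · exact hφc h
    exact hle hx
  have hU : ∀ x ∈ U, x ∈ V ∨ 1 < φ x := by
    intro x hx
    induction hx using Submonoid.closure_induction with
    | mem y hy =>
      rcases hy with (hy | hy) | hy
      · right
        rw [Set.mem_singleton_iff.1 hy, hφt]
        exact hlt
      · exact Or.inl (Submonoid.subset_closure (Or.inl hy))
      · exact Or.inl (Submonoid.subset_closure (Or.inr hy))
    | one => exact Or.inl V.one_mem
    | mul a b _ _ ha hb =>
      rcases ha with ha | ha <;> rcases hb with hb | hb
      · exact Or.inl (V.mul_mem ha hb)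
      · right; rw [map_mul, hV a ha, one_mul]; exact hb
      · right; rw [map_mul, hV b hb, mul_one]; exact ha
      · right; rw [map_mul]; exact one_lt_mul' ha hb
  have hge : ∀ x ∈ U, 1 ≤ φ x := by
    intro x hx
    rcases hU x hx with h | h
    · exact (hV x h).ge
    · exact h.le
  refine ⟨hVU, ⟨t, htU, fun h => ?_⟩, ?_⟩
  · have := hV t h
    rw [hφt] at this
    exact hlt.ne' this
  · intro u hu z hz hzV
    have hz1 : 1 < φ z := (hU z hz).resolve_left hzV
    have hu1 := hge u hu
    refine ⟨U.mul_mem hu hz, fun h => ?_, U.mul_mem hz hu, fun h => ?_⟩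
    · have := hV _ h
      rw [map_mul] at this
      exact (one_lt_mul_of_le_of_lt' hu1 hz1).ne' this
    · have := hV _ h
      rw [map_mul] at this
      exact (one_lt_mul_of_lt_of_le' hz1 hu1).ne' this
end

section
/- Let H be a group and let W be a finite subset of H. Let T = ⟨W⟩ be the submonoid of H generated by W, and let S = ⟨{t} ∪ H ∪ tWt⁻¹⟩ be the submonoid of the free product H ∗ FG(t) generated by {t} ∪ H ∪ {t * w * t⁻¹ | w ∈ W}. Then for all h ∈ H: t * h * t⁻¹ ∈ S if and only if h ∈ T. -/
open Monoid

open Classical in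
/-- The permutation of `H × ℤ` shifting the second coordinate over `T` and fixing the rest. -/
noncomputable def shiftPerm {H : Type} [Group H] (T : Submonoid H) : Equiv.Perm (H × ℤ) where
  toFun p := (p.1, if p.1 ∈ T then p.2 + 1 else p.2)
  invFun p := (p.1, if p.1 ∈ T then p.2 - 1 else p.2)
  left_inv p := by by_cases h : p.1 ∈ T <;> simp [h]
  right_inv p := by by_cases h : p.1 ∈ T <;> simp [h]

/-- `H` acts on `H × ℤ` by left multiplication on the first coordinate. -/
def leftPerm (H : Type) [Group H] : H →* Equiv.Perm (H × ℤ) where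
  toFun g :=
    { toFun := fun p => (g * p.1, p.2)
      invFun := fun p => (g⁻¹ * p.1, p.2)
      left_inv := fun p => by simp
      right_inv := fun p => by simp }
  map_one' := by ext p <;> simp
  map_mul' a b := by ext p <;> simp [mul_assoc]

/-- The induced action of the free product. -/
noncomputable def actHom {H : Type} [Group H] (T : Submonoid H) :
    Coprod H (FreeGroup Unit) →* Equiv.Perm (H × ℤ) :=
  Coprod.lift (leftPerm H) (FreeGroup.lift fun _ => shiftPerm T)

open Classical in
lemma conj_apply {H : Type} [Group H] (T : Submonoid H) (h : H) (p : H × ℤ) :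
    (shiftPerm T * leftPerm H h * (shiftPerm T)⁻¹) p =
      (h * p.1, if h * p.1 ∈ T then (if p.1 ∈ T then p.2 - 1 else p.2) + 1
        else (if p.1 ∈ T then p.2 - 1 else p.2)) := rfl

/-- Let `H` be a group, `W ⊆ H` finite, `T = ⟨W⟩ ≤ H` and let `S` be the submonoid of the free
product `H ∗ FG(t)` generated by `{t} ∪ H ∪ tWt⁻¹`.  Then for all `h ∈ H`:
`t h t⁻¹ ∈ S ↔ h ∈ T`. -/
theorem conj_mem_iff_mem (H : Type) [Group H] (W : Finset H) :
    let t : Coprod H (FreeGroup Unit) := Coprod.inr (FreeGroup.of ())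
    let T : Submonoid H := Submonoid.closure (W : Set H)
    let S : Submonoid (Coprod H (FreeGroup Unit)) :=
      Submonoid.closure
        ({t} ∪ Set.range (fun h : H => Coprod.inl h) ∪
          {x | ∃ w ∈ W, x = t * Coprod.inl w * t⁻¹})
    ∀ h : H, t * Coprod.inl h * t⁻¹ ∈ S ↔ h ∈ T := by
  intro t T S h
  have ht : actHom T t = shiftPerm T := by simp [actHom, t]
  have hl : ∀ g : H, actHom T (Coprod.inl g) = leftPerm H g := by
    intro g; simp [actHom]
  constructor
  · intro hS
    have key : ∀ x ∈ S, ∀ p : H × ℤ, 0 < p.2 → 0 < (actHom T x p).2 := by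
      intro x hx
      induction hx using Submonoid.closure_induction with
      | mem x hx =>
        intro p hp
        rcases hx with (hx | ⟨g, rfl⟩) | ⟨w, hw, rfl⟩
        · rw [Set.mem_singleton_iff.1 hx, ht]
          simp only [shiftPerm, Equiv.coe_fn_mk]
          split_ifs <;> omega
        · simp only [hl]
          exact hp
        · have hwT : w ∈ T := Submonoid.subset_closure hw
          rw [map_mul, map_mul, map_inv, ht, hl, conj_apply]
          by_cases h1 : p.1 ∈ T
          · simp [h1, T.mul_mem hwT h1, hp]
          · simp only [h1, if_false]
            split_ifs <;> omega
      | one => intro p hp; simpa using hp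
      | mul x y _ _ hx hy =>
        intro p hp
        rw [map_mul]
        exact hx _ (hy p hp)
    have h1 := key _ hS (1, 1) one_pos
    rw [map_mul, map_mul, map_inv, ht, hl, conj_apply] at h1
    by_contra hT
    simp [hT] at h1
  · intro hT
    induction hT using Submonoid.closure_induction with
    | mem w hw => exact Submonoid.subset_closure (Or.inr ⟨w, hw, rfl⟩)
    | one => simp
    | mul a b _ _ ha hb =>
      have := S.mul_mem ha hb
      simpa [mul_assoc] using this
end

section
/- Let B be a type and let σ be any monoid congruence on FreeMonoid (B × Bool) containing the Vagner congruence ν. If u, v ∈ FreeMonoid (B × Bool) are words such that u * v is right invertible modulo σ, then σ relates u * v * v⁻¹ to u. -/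
/-- The formal inverse of a word over `B`: reverse the word and negate the `Bool` component
of each letter. -/
def wInv {B : Type*} (w : FreeMonoid (B × Bool)) : FreeMonoid (B × Bool) :=
  FreeMonoid.ofList (((FreeMonoid.toList w).map fun p => (p.1, !p.2)).reverse)

/-- The generating relation of the Vagner congruence: `w w⁻¹ w ~ w` and
`w w⁻¹ u u⁻¹ ~ u u⁻¹ w w⁻¹` for all words `u, w`. -/
def vagnerRel (B : Type*) : FreeMonoid (B × Bool) → FreeMonoid (B × Bool) → Prop :=
  fun x y =>
    (∃ w, x = w * wInv w * w ∧ y = w) ∨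
    (∃ u w, x = w * wInv w * (u * wInv u) ∧ y = u * wInv u * (w * wInv w))

/-- The Vagner congruence on `FreeMonoid (B × Bool)`. -/
def vagnerCon (B : Type*) : Con (FreeMonoid (B × Bool)) := conGen (vagnerRel B)

theorem wInv_mul_aux {B : Type*} (u v : FreeMonoid (B × Bool)) :
    wInv (u * v) = wInv v * wInv u := by
  apply FreeMonoid.toList.injective
  simp [wInv]

theorem wInv_wInv_aux {B : Type*} (u : FreeMonoid (B × Bool)) : wInv (wInv u) = u := by
  apply FreeMonoid.toList.injective
  simp [wInv, Function.comp_def]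

/-- For any congruence `σ` containing the Vagner congruence: if `u * v` is right invertible
modulo `σ`, then `σ` relates `u * v * v⁻¹` to `u`. -/
theorem rightInvertible_mul_inv_cancel {B : Type*} (σ : Con (FreeMonoid (B × Bool)))
    (hσ : vagnerCon B ≤ σ) (u v : FreeMonoid (B × Bool))
    (h : ∃ z, σ (u * v * z) 1) :
    σ (u * v * wInv v) u := by
  obtain ⟨z, hz⟩ := h
  have e1 : ∀ w : FreeMonoid (B × Bool),
      (w : σ.Quotient) * (wInv w : FreeMonoid (B × Bool)) * w = w := fun w =>
    (Con.eq σ).2 (hσ (ConGen.Rel.of _ _ (Or.inl ⟨w, rfl, rfl⟩)))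
  have e2 : ∀ u w : FreeMonoid (B × Bool),
      (w : σ.Quotient) * (wInv w : FreeMonoid (B × Bool)) * (u * (wInv u : FreeMonoid (B × Bool)))
        = u * (wInv u : FreeMonoid (B × Bool)) * (w * (wInv w : FreeMonoid (B × Bool))) :=
    fun u w => (Con.eq σ).2 (hσ (ConGen.Rel.of _ _ (Or.inr ⟨u, w, rfl, rfl⟩)))
  have e3 : ∀ x z : FreeMonoid (B × Bool), (x : σ.Quotient) * z = 1 →
      (x : σ.Quotient) * (wInv x : FreeMonoid (B × Bool)) = 1 := by
    intro x z hxz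
    calc (x : σ.Quotient) * (wInv x : FreeMonoid (B × Bool))
        = x * (wInv x : FreeMonoid (B × Bool)) * (x * z) := by rw [hxz, mul_one]
      _ = x * (wInv x : FreeMonoid (B × Bool)) * x * z := by rw [← mul_assoc]
      _ = 1 := by rw [e1, hxz]
  have hz' : ((u * v : FreeMonoid (B × Bool)) : σ.Quotient) * z = 1 := (Con.eq σ).2 hz
  have h1 := e3 _ _ hz'
  rw [wInv_mul_aux, Con.coe_mul, Con.coe_mul] at h1
  have h2 := e2 v (wInv u)
  rw [wInv_wInv_aux] at h2
  apply (Con.eq σ).1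
  rw [Con.coe_mul, Con.coe_mul]
  calc (u : σ.Quotient) * v * (wInv v : FreeMonoid (B × Bool))
      = u * (wInv u : FreeMonoid (B × Bool)) * u * v * (wInv v : FreeMonoid (B × Bool)) := by
        rw [e1]
    _ = u * ((wInv u : FreeMonoid (B × Bool)) * u * (v * (wInv v : FreeMonoid (B × Bool)))) := by
        simp only [mul_assoc]
    _ = u * v * ((wInv v : FreeMonoid (B × Bool)) * (wInv u : FreeMonoid (B × Bool))) * u := by
        rw [h2]; simp only [mul_assoc]
    _ = u := by rw [h1, one_mul]
end

section
/- Let B be a type, let e ∈ FreeMonoid (B × Bool) be an idempotent word (i.e., FreeGroup.mk e = 1 in FreeGroup B), and let r₁, r₂, …, r_m ∈ FreeMonoid (B × Bool). Then the congruence on FreeMonoid (B × Bool) generated by the Vagner congruence ν together with the pairs (e * r₁, 1), (r₂, 1), …, (r_m, 1) is equal to the congruence generated by ν together with the pairs (e, 1), (r₁, 1), (r₂, 1), …, (r_m, 1); i.e., the inverse monoid presentations Inv⟨B | e·r₁ = 1, r₂ = 1, …, r_m = 1⟩ and Inv⟨B | e = 1, r₁ = 1, …, r_m = 1⟩ define the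 same quotient. -/
theorem wInv_mul' {B : Type*} (a b : FreeMonoid (B × Bool)) :
    wInv (a * b) = wInv b * wInv a := by
  simp [wInv]

theorem wInv_wInv' {B : Type*} (a : FreeMonoid (B × Bool)) :
    wInv (wInv a) = a := by
  simp [wInv, Function.comp_def]

/-- A word reducing to the empty word maps to an idempotent in any monoid satisfying
the Vagner relations. -/
theorem idem_of_red {B Q : Type*} [Monoid Q] (f : FreeMonoid (B × Bool) →* Q)
    (h1 : ∀ w, f w * f (wInv w) * f w = f w)
    (h2 : ∀ u w, f w * f (wInv w) * (f u * f (wInv u)) = f u * f (wInv u) * (f w * f (wInv w)))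
    (L : List (B × Bool)) (h : FreeGroup.Red L []) :
    f (FreeMonoid.ofList L) * f (FreeMonoid.ofList L) = f (FreeMonoid.ofList L) ∧
      ∀ u, Commute (f u * f (wInv u)) (f (FreeMonoid.ofList L)) := by
  induction h using Relation.ReflTransGen.head_induction_on with
  | refl => simp
  | head hs _ ih =>
    obtain ⟨ih1, ih2⟩ := ih
    cases hs with
    | @not a b x c =>
      have key : ∃ p, f (FreeMonoid.ofList (a ++ (x, c) :: (x, !c) :: b)) =
          f p * f (wInv p) * f (FreeMonoid.ofList (a ++ b)) := by
        refine ⟨FreeMonoid.ofList a * FreeMonoid.of (x, c), ?_⟩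
        have hx : FreeMonoid.of (x, !c) = wInv (FreeMonoid.of (x, c)) := rfl
        have e1 : FreeMonoid.ofList (a ++ (x, c) :: (x, !c) :: b) =
          FreeMonoid.ofList a * (FreeMonoid.of (x, c) * FreeMonoid.of (x, !c)) *
            FreeMonoid.ofList b := by
          rw [mul_assoc]; rfl
        have e2 : FreeMonoid.ofList (a ++ b) = FreeMonoid.ofList a * FreeMonoid.ofList b := rfl
        rw [e1, e2, hx, wInv_mul']
        generalize FreeMonoid.ofList a = A
        generalize FreeMonoid.of (x, c) = X
        have h3 := h2 X (wInv A)
        rw [wInv_wInv'] at h3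
        simp only [map_mul]
        calc f A * (f X * f (wInv X)) * f (FreeMonoid.ofList b)
            = (f A * f (wInv A) * f A) * (f X * f (wInv X)) * f (FreeMonoid.ofList b) := by
              rw [h1]
          _ = f A * (f (wInv A) * f A * (f X * f (wInv X))) * f (FreeMonoid.ofList b) := by
              simp only [mul_assoc]
          _ = _ := by rw [h3]; simp only [mul_assoc]
      obtain ⟨p, hp⟩ := key
      rw [hp]
      have hpp : f p * f (wInv p) * (f p * f (wInv p)) = f p * f (wInv p) := by
        rw [← mul_assoc, h1]
      refine ⟨?_, fun u => Commute.mul_right (h2 p u) (ih2 u)⟩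
      have hc := (ih2 p).eq
      generalize f p * f (wInv p) = P at *
      generalize f (FreeMonoid.ofList (a ++ b)) = M at *
      calc P * M * (P * M) = P * (M * P) * M := by simp only [mul_assoc]
        _ = (P * P) * (M * M) := by rw [← hc]; simp only [mul_assoc]
        _ = P * M := by rw [hpp, ih1]

theorem con_idem {B : Type*} (c : Con (FreeMonoid (B × Bool)))
    (hc : ∀ x y, vagnerRel B x y → c x y) (e : FreeMonoid (B × Bool))
    (he : FreeGroup.mk (FreeMonoid.toList e) = 1) : c (e * e) e := by
  have hr : FreeGroup.Red (FreeMonoid.toList e) [] := by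
    rw [FreeGroup.one_eq_mk] at he
    obtain ⟨l, h1, h2⟩ := FreeGroup.Red.exact.1 he
    rw [FreeGroup.Red.nil_iff] at h2
    exact h2 ▸ h1
  have := (idem_of_red c.mk' (fun w => ?_) (fun u w => ?_) _ hr).1
  · exact c.eq.1 this
  · exact c.eq.2 (hc _ _ (Or.inl ⟨w, rfl, rfl⟩))
  · exact c.eq.2 (hc _ _ (Or.inr ⟨u, w, rfl, rfl⟩))

/-- If `e` is an idempotent word then the inverse monoid presentations
`Inv⟨B | e·r₁ = 1, r₂ = 1, …, r_m = 1⟩` and `Inv⟨B | e = 1, r₁ = 1, …, r_m = 1⟩`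
determine the same congruence on the free monoid, hence the same quotient. -/
theorem idempotent_relator_split {B : Type*} (e : FreeMonoid (B × Bool))
    (he : FreeGroup.mk (FreeMonoid.toList e) = 1) {m : ℕ} (hm : 0 < m)
    (r : Fin m → FreeMonoid (B × Bool)) :
    conGen (fun x y => vagnerRel B x y ∨ (x = e * r ⟨0, hm⟩ ∧ y = 1) ∨
        (∃ i : Fin m, i ≠ ⟨0, hm⟩ ∧ x = r i ∧ y = 1)) =
      conGen (fun x y => vagnerRel B x y ∨ (x = e ∧ y = 1) ∨
        (∃ i : Fin m, x = r i ∧ y = 1)) := by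
  apply le_antisymm
  · refine Con.conGen_le.2 ?_
    rintro x y (h | ⟨rfl, rfl⟩ | ⟨i, -, rfl, rfl⟩)
    · exact ConGen.Rel.of _ _ (Or.inl h)
    · have h := ConGen.Rel.mul
        (ConGen.Rel.of (r := fun x y => vagnerRel B x y ∨ (x = e ∧ y = 1) ∨
          (∃ i : Fin m, x = r i ∧ y = 1)) e 1 (Or.inr (Or.inl ⟨rfl, rfl⟩)))
        (ConGen.Rel.of (r ⟨0, hm⟩) 1 (Or.inr (Or.inr ⟨_, rfl, rfl⟩)))
      rw [one_mul] at h
      exact h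
    · exact ConGen.Rel.of _ _ (Or.inr (Or.inr ⟨i, rfl, rfl⟩))
  · refine Con.conGen_le.2 ?_
    set c := conGen (fun x y => vagnerRel B x y ∨ (x = e * r ⟨0, hm⟩ ∧ y = 1) ∨
        (∃ i : Fin m, i ≠ ⟨0, hm⟩ ∧ x = r i ∧ y = 1)) with hcdef
    have hv : ∀ x y, vagnerRel B x y → c x y := fun x y h => ConGen.Rel.of _ _ (Or.inl h)
    have her : c (e * r ⟨0, hm⟩) 1 := ConGen.Rel.of _ _ (Or.inr (Or.inl ⟨rfl, rfl⟩))
    have hee := con_idem c hv e he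
    have h1 : c e 1 := by
      have a1 : c (e * (e * r ⟨0, hm⟩)) e := by simpa using c.mul (c.refl e) her
      have a2 : c (e * (e * r ⟨0, hm⟩)) (e * r ⟨0, hm⟩) := by
        simpa [mul_assoc] using c.mul hee (c.refl (r ⟨0, hm⟩))
      exact c.trans (c.symm a1) (c.trans a2 her)
    have h2 : c (r ⟨0, hm⟩) 1 := by
      have a3 : c (e * r ⟨0, hm⟩) (r ⟨0, hm⟩) := by
        simpa using c.mul h1 (c.refl (r ⟨0, hm⟩))
      exact c.trans (c.symm a3) her
    rintro x y (h | ⟨rfl, rfl⟩ | ⟨i, rfl, rfl⟩)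
    · exact hv _ _ h
    · exact h1
    · by_cases hi : i = ⟨0, hm⟩
      · rw [hi]; exact h2
      · exact ConGen.Rel.of _ _ (Or.inr (Or.inr ⟨i, hi, rfl, rfl⟩))
end

section
/- With the construction setup fixed (alphabet B = Fin n ⊕ Unit, idempotent word e, inverse monoid M = Inv⟨B | e·r₁ = 1, r₂ = 1, …, r_m = 1⟩ with defining congruence σ, group G = Gp⟨Fin n | r₁ = 1, …, r_m = 1⟩, and T the submonoid of G generated by the images of w₁, …, w_k): if the word problem for M is decidable, i.e., the predicate on pairs (u, v) ∈ FreeMonoid (B × Bool) × FreeMonoid (B × Bool) given by 'σ relates u and v' is ComputablePred, then the membership problem for T within G is decidable, i.e., the predicate on words u ∈ FreeMonoid ((Fin n) × Bool) given by πG(u) ∈ T is ComputablePred. -/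
/-- The alphabet `B = Fin n ⊕ Unit`, the generators `a₁, …, a_n` together with the extra
generator `t`. -/
abbrev B (n : ℕ) : Type := Fin n ⊕ Unit

/-- Embedding of words over `Fin n` as words over `B n`. -/
def emb {n : ℕ} : FreeMonoid (Fin n × Bool) →* FreeMonoid (B n × Bool) :=
  FreeMonoid.map (fun p => (Sum.inl p.1, p.2))

/-- The one-letter word `t`. -/
def tW (n : ℕ) : FreeMonoid (B n × Bool) := FreeMonoid.of (Sum.inr (), true)

/-- The one-letter word `t⁻¹`. -/
def tWinv (n : ℕ) : FreeMonoid (B n × Bool) := FreeMonoid.of (Sum.inr (), false)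

/-- The one-letter word `aᵢ`. -/
def aW {n : ℕ} (i : Fin n) : FreeMonoid (B n × Bool) := FreeMonoid.of (Sum.inl i, true)

/-- `u ↦ u u⁻¹`. -/
def idem {β : Type*} (u : FreeMonoid (β × Bool)) : FreeMonoid (β × Bool) := u * wInv u

/-- The idempotent word
`e(a₁, …, a_n, t w₁ t⁻¹, …, t w_k t⁻¹, a₁⁻¹, …, a_n⁻¹)`, where `e(u₁, …, u_l)` denotes
`u₁ u₁⁻¹ ⋯ u_l u_l⁻¹`. -/
def eWord {n k : ℕ} (w : Fin k → FreeMonoid (Fin n × Bool)) : FreeMonoid (B n × Bool) :=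
  ((List.ofFn fun i : Fin n => idem (aW i)) ++
    (List.ofFn fun j : Fin k => idem (tW n * emb (w j) * tWinv n)) ++
    (List.ofFn fun i : Fin n => idem (wInv (aW i)))).prod

/-- The congruence `σ` defining the inverse monoid
`M = Inv⟨B | e·r₁ = 1, r₂ = 1, …, r_m = 1⟩`: it is generated by the Vagner congruence
together with the pairs `(e·r₁, 1)` and `(rᵢ, 1)` for `i ≠ 1`. -/
def invCon {n m k : ℕ} (hm : 0 < m) (r : Fin m → FreeMonoid (Fin n × Bool))
    (w : Fin k → FreeMonoid (Fin n × Bool)) : Con (FreeMonoid (B n × Bool)) :=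
  conGen (fun x y => vagnerRel (B n) x y ∨
    (x = eWord w * emb (r ⟨0, hm⟩) ∧ y = 1) ∨
    (∃ i : Fin m, i ≠ ⟨0, hm⟩ ∧ x = emb (r i) ∧ y = 1))

/-- The set of relators of the maximal group image
`K = Gp⟨B | e·r₁ = 1, r₂ = 1, …, r_m = 1⟩`, as elements of `FreeGroup (B n)`. -/
def relsK {n m k : ℕ} (hm : 0 < m) (r : Fin m → FreeMonoid (Fin n × Bool))
    (w : Fin k → FreeMonoid (Fin n × Bool)) : Set (FreeGroup (B n)) :=
  insert (FreeGroup.mk (FreeMonoid.toList (eWord w * emb (r ⟨0, hm⟩))))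
    {x | ∃ i : Fin m, i ≠ ⟨0, hm⟩ ∧ x = FreeGroup.mk (FreeMonoid.toList (emb (r i)))}

/-- The set of relators of the group `G = Gp⟨Fin n | r₁ = 1, …, r_m = 1⟩`. -/
def relsG {n m : ℕ} (r : Fin m → FreeMonoid (Fin n × Bool)) : Set (FreeGroup (Fin n)) :=
  {x | ∃ i : Fin m, x = FreeGroup.mk (FreeMonoid.toList (r i))}

/-- The canonical evaluation map of words over `Fin n` in the group `G`. -/
def piG {n m : ℕ} (r : Fin m → FreeMonoid (Fin n × Bool)) (u : FreeMonoid (Fin n × Bool)) :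
    PresentedGroup (relsG r) :=
  PresentedGroup.mk (relsG r) (FreeGroup.mk (FreeMonoid.toList u))

/-- The submonoid `T` of `G` generated by the images of `w₁, …, w_k`. -/
def subT {n m k : ℕ} (r : Fin m → FreeMonoid (Fin n × Bool))
    (w : Fin k → FreeMonoid (Fin n × Bool)) : Submonoid (PresentedGroup (relsG r)) :=
  Submonoid.closure (Set.range fun j : Fin k => piG r (w j))

instance {α : Type*} [Primcodable α] : Primcodable (FreeMonoid α) :=
  Primcodable.ofEquiv (List α) FreeMonoid.toList

section words
variable {β : Type*}

theorem wInv_mul (u v : FreeMonoid (β × Bool)) : wInv (u * v) = wInv v * wInv u := by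
  apply FreeMonoid.toList.injective
  simp [wInv]

theorem wInv_wInv (u : FreeMonoid (β × Bool)) : wInv (wInv u) = u := by
  apply FreeMonoid.toList.injective
  simp [wInv, Function.comp_def]

theorem wInv_of (b : β) (s : Bool) :
    wInv (FreeMonoid.of (b, s)) = FreeMonoid.of (b, !s) := by
  apply FreeMonoid.toList.injective
  simp [wInv]

/-! ### Partial injections model -/

variable {X : Type*} (st : β → X → X → Prop)

/-- One letter acting as a relation. -/
def letRel (p : β × Bool) (x y : X) : Prop := if p.2 then st p.1 x y else st p.1 y x

/-- A list of letters acting as a relation. -/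
def evL : List (β × Bool) → X → X → Prop
  | [], x, y => x = y
  | p :: L, x, y => ∃ z, letRel st p x z ∧ evL L z y

/-- A word acting as a relation. -/
def ev (u : FreeMonoid (β × Bool)) : X → X → Prop := evL st (FreeMonoid.toList u)

theorem evL_append (L K : List (β × Bool)) (x y : X) :
    evL st (L ++ K) x y ↔ ∃ z, evL st L x z ∧ evL st K z y := by
  induction L generalizing x with
  | nil => simp [evL]
  | cons p L ih =>
    simp only [List.cons_append, evL, ih]
    constructor
    · rintro ⟨z, h, z', h1, h2⟩
      exact ⟨z', ⟨z, h, h1⟩, h2⟩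
    · rintro ⟨z', ⟨z, h, h1⟩, h2⟩
      exact ⟨z, h, z', h1, h2⟩

theorem ev_mul (u v : FreeMonoid (β × Bool)) (x y : X) :
    ev st (u * v) x y ↔ ∃ z, ev st u x z ∧ ev st v z y := by
  simp [ev, evL_append]

theorem ev_one (x y : X) : ev st 1 x y ↔ x = y := by
  simp [ev, evL]

theorem ev_of (p : β × Bool) (x y : X) : ev st (FreeMonoid.of p) x y ↔ letRel st p x y := by
  simp [ev, evL]

theorem ev_wInv (u : FreeMonoid (β × Bool)) (x y : X) :
    ev st (wInv u) x y ↔ ev st u y x := by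
  induction u using FreeMonoid.inductionOn generalizing x y with
  | one =>
    have : wInv (1 : FreeMonoid (β × Bool)) = 1 := by
      apply FreeMonoid.toList.injective
      simp [wInv]
    rw [this, ev_one, ev_one, eq_comm]
  | of p =>
    obtain ⟨b, s⟩ := p
    rw [wInv_of, ev_of, ev_of]
    cases s <;> simp [letRel]
  | mul u v hu hv =>
    rw [wInv_mul, ev_mul, ev_mul]
    simp only [hu, hv]
    exact exists_congr fun z => and_comm

variable {st}

theorem ev_fun (hf : ∀ b x y z, st b x y → st b x z → y = z)
    (hi : ∀ b x y z, st b x z → st b y z → x = y)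
    (u : FreeMonoid (β × Bool)) (x y z : X) (h1 : ev st u x y) (h2 : ev st u x z) :
    y = z := by
  induction u using FreeMonoid.inductionOn generalizing x y z with
  | one =>
    rw [ev_one] at h1 h2
    exact h1.symm.trans h2
  | of p =>
    obtain ⟨b, s⟩ := p
    rw [ev_of] at h1 h2
    cases s
    · exact hi b _ _ x (by simpa [letRel] using h1) (by simpa [letRel] using h2)
    · exact hf b x _ _ (by simpa [letRel] using h1) (by simpa [letRel] using h2)
  | mul u v hu hv =>
    rw [ev_mul] at h1 h2
    obtain ⟨a, ha, ha'⟩ := h1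
    obtain ⟨b, hb, hb'⟩ := h2
    obtain rfl := hu _ _ _ ha hb
    exact hv _ _ _ ha' hb'

theorem ev_inj (hf : ∀ b x y z, st b x y → st b x z → y = z)
    (hi : ∀ b x y z, st b x z → st b y z → x = y)
    (u : FreeMonoid (β × Bool)) (x y z : X) (h1 : ev st u x z) (h2 : ev st u y z) :
    x = y :=
  ev_fun hf hi (wInv u) z x y ((ev_wInv st u z x).2 h1) ((ev_wInv st u z y).2 h2)

theorem ev_idem (hf : ∀ b x y z, st b x y → st b x z → y = z)
    (hi : ∀ b x y z, st b x z → st b y z → x = y)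
    (u : FreeMonoid (β × Bool)) (x y : X) :
    ev st (u * wInv u) x y ↔ x = y ∧ ∃ z, ev st u x z := by
  rw [ev_mul]
  simp only [ev_wInv]
  constructor
  · rintro ⟨z, h1, h2⟩
    exact ⟨ev_inj hf hi u _ _ _ h1 h2, z, h1⟩
  · rintro ⟨rfl, z, h⟩
    exact ⟨z, h, h⟩

theorem ev_vagner (hf : ∀ b x y z, st b x y → st b x z → y = z)
    (hi : ∀ b x y z, st b x z → st b y z → x = y)
    (u v : FreeMonoid (β × Bool)) (h : vagnerRel β u v) (x y : X) :
    ev st u x y ↔ ev st v x y := by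
  obtain ⟨w, rfl, rfl⟩ | ⟨u, w, rfl, rfl⟩ := h
  · rw [ev_mul]
    simp only [ev_idem hf hi]
    constructor
    · rintro ⟨z, ⟨rfl, -⟩, h⟩
      exact h
    · intro h
      exact ⟨x, ⟨rfl, y, h⟩, h⟩
  · rw [ev_mul, ev_mul]
    simp only [ev_idem hf hi]
    constructor
    · rintro ⟨z, ⟨rfl, h⟩, rfl, h'⟩
      exact ⟨_, ⟨rfl, h'⟩, rfl, h⟩
    · rintro ⟨z, ⟨rfl, h⟩, rfl, h'⟩
      exact ⟨_, ⟨rfl, h'⟩, rfl, h⟩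

end words

/-- The congruence of words acting as the same relation. -/
def evCon {β X : Type*} (st : β → X → X → Prop) : Con (FreeMonoid (β × Bool)) where
  r u v := ∀ x y, ev st u x y ↔ ev st v x y
  iseqv := ⟨fun _ _ _ => Iff.rfl, fun h x y => (h x y).symm,
    fun h h' x y => (h x y).trans (h' x y)⟩
  mul' := by
    intro a b c d h h' x y
    rw [ev_mul, ev_mul]
    exact exists_congr fun z => and_congr (h x z) (h' z y)

theorem ev_prod_eq {β X : Type*} (st : β → X → X → Prop) (L : List (FreeMonoid (β × Bool)))
    (h : ∀ u ∈ L, ∀ x y, ev st u x y ↔ x = y) (x y : X) : ev st L.prod x y ↔ x = y := by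
  induction L generalizing x with
  | nil => simp [ev_one]
  | cons u L ih =>
    rw [List.prod_cons, ev_mul]
    simp only [h u (by simp)]
    simp [ih (fun u hu => h u (by simp [hu]))]

section main
variable {n m k : ℕ} (hm : 0 < m) (r : Fin m → FreeMonoid (Fin n × Bool))
    (w : Fin k → FreeMonoid (Fin n × Bool))

theorem piG_mul (u v : FreeMonoid (Fin n × Bool)) : piG r (u * v) = piG r u * piG r v := by
  simp only [piG]
  rw [← map_mul, FreeGroup.mul_mk]
  rfl

theorem piG_one : piG r 1 = 1 := by
  have : FreeGroup.mk (FreeMonoid.toList (1 : FreeMonoid (Fin n × Bool))) = 1 := rfl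
  simp only [piG, this, map_one]

theorem piG_rel (i : Fin m) : piG r (r i) = 1 :=
  PresentedGroup.one_of_mem (rels := relsG r) ⟨i, rfl⟩

theorem piG_surj (g : PresentedGroup (relsG r)) : ∃ u, piG r u = g := by
  obtain ⟨x, rfl⟩ := PresentedGroup.mk_surjective (relsG r) g
  exact ⟨FreeMonoid.ofList x.toWord, by simp [piG, FreeGroup.mk_toWord]⟩

theorem piG_inv (i : Fin n) :
    piG r (FreeMonoid.of (i, false)) = (piG r (FreeMonoid.of (i, true)))⁻¹ := by
  simp only [piG]
  rw [← map_inv, FreeGroup.inv_mk]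
  rfl

/-- The letters acting on `ℕ × G`. -/
def stG (φ : ℕ × PresentedGroup (relsG r) → ℕ × PresentedGroup (relsG r)) :
    B n → ℕ × PresentedGroup (relsG r) → ℕ × PresentedGroup (relsG r) → Prop
  | Sum.inl i, x, y => y = (x.1, x.2 * piG r (FreeMonoid.of (i, true)))
  | Sum.inr _, x, y => y = φ x

theorem ev_emb (φ : ℕ × PresentedGroup (relsG r) → ℕ × PresentedGroup (relsG r))
    (u : FreeMonoid (Fin n × Bool)) (x y : ℕ × PresentedGroup (relsG r)) :
    ev (stG r φ) (emb u) x y ↔ y = (x.1, x.2 * piG r u) := by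
  induction u using FreeMonoid.inductionOn generalizing x y with
  | one => simp [ev_one, piG_one, eq_comm]
  | of p =>
    obtain ⟨i, s⟩ := p
    have : emb (FreeMonoid.of (i, s)) = FreeMonoid.of ((Sum.inl i : B n), s) := rfl
    rw [this, ev_of]
    cases s
    · simp only [letRel, stG, piG_inv, Prod.ext_iff]
      simp [eq_mul_inv_iff_mul_eq]
      exact and_congr eq_comm eq_comm
    · simp [letRel, stG]
  | mul u v hu hv =>
    rw [map_mul, ev_mul]
    simp only [hu, hv, piG_mul]
    simp [mul_assoc]

theorem mem_of_invCon (u : FreeMonoid (Fin n × Bool))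
    (h : invCon hm r w (idem (tW n * emb u * tWinv n)) 1) : piG r u ∈ subT r w := by
  classical
  have hc : Countable (PresentedGroup (relsG r)) := by
    have : Countable (FreeMonoid (Fin n × Bool)) :=
      inferInstanceAs (Countable (List (Fin n × Bool)))
    exact Function.Surjective.countable (f := piG r) (piG_surj r)
  obtain ⟨e1⟩ := nonempty_denumerable (ℕ × PresentedGroup (relsG r))
  obtain ⟨e2⟩ := nonempty_denumerable (ℕ × subT r w)
  let E : ℕ × PresentedGroup (relsG r) ≃ ℕ × subT r w := Denumerable.equiv₂ _ _
  let φ : ℕ × PresentedGroup (relsG r) → ℕ × PresentedGroup (relsG r) :=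
    fun x => ((E x).1, ((E x).2 : PresentedGroup (relsG r)))
  have hφ : Function.Injective φ := by
    intro x y hxy
    apply E.injective
    have := Prod.ext_iff.1 hxy
    exact Prod.ext this.1 (Subtype.ext this.2)
  have hr : ∀ c (g : PresentedGroup (relsG r)), g ∈ subT r w → ∃ x, φ x = (c, g) := by
    intro c g hg
    exact ⟨E.symm (c, ⟨g, hg⟩), by simp [φ]⟩
  have hm' : ∀ x, (φ x).2 ∈ subT r w := fun x => (E x).2.2
  clear_value φ
  have hf : ∀ b x y z, stG r φ b x y → stG r φ b x z → y = z := by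
    rintro (i | i) x y z h1 h2 <;> exact Eq.trans h1 (Eq.symm h2)
  have hi : ∀ b x y z, stG r φ b x z → stG r φ b y z → x = y := by
    rintro (i | i) x y z h1 h2
    · have := Prod.ext_iff.1 (Eq.trans (Eq.symm h1) h2)
      exact Prod.ext this.1 (mul_right_cancel this.2)
    · exact hφ (Eq.trans (Eq.symm h1) h2)
  -- action of `t v t⁻¹`
  have ht : ∀ v x z, ev (stG r φ) (tW n * emb v * tWinv n) x z ↔
      φ z = ((φ x).1, (φ x).2 * piG r v) := by
    intro v x z
    rw [ev_mul]
    simp only [ev_mul, ev_emb, tW, tWinv, ev_of]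
    simp [letRel, stG, eq_comm]
  have hE : ∀ x y, ev (stG r φ) (eWord w) x y ↔ x = y := by
    apply ev_prod_eq
    intro v hv x y
    have key : ∀ v', (∃ z, ev (stG r φ) v' x z) → (ev (stG r φ) (idem v') x y ↔ x = y) := by
      intro v' hv'
      rw [idem, ev_idem hf hi]
      exact and_iff_left hv'
    simp only [List.mem_append, List.mem_ofFn] at hv
    obtain (⟨i, rfl⟩ | ⟨j, rfl⟩) | ⟨i, rfl⟩ := hv
    · apply key
      simp [aW, ev_of, letRel, stG]
    · apply key
      obtain ⟨z, hz⟩ := hr (φ x).1 ((φ x).2 * piG r (w j))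
        (mul_mem (hm' x) (Submonoid.subset_closure ⟨j, rfl⟩))
      exact ⟨z, (ht _ _ _).2 hz⟩
    · apply key
      refine ⟨(x.1, x.2 * (piG r (FreeMonoid.of (i, true)))⁻¹), ?_⟩
      simp [aW, ev_wInv, ev_of, letRel, stG]
  have hle : invCon hm r w ≤ evCon (stG r φ) := by
    apply Con.conGen_le.2
    rintro x y (h | ⟨rfl, rfl⟩ | ⟨i, -, rfl, rfl⟩) a b
    · exact ev_vagner hf hi _ _ h a b
    · rw [ev_mul, ev_one]
      simp only [hE, ev_emb, piG_rel]
      simp [eq_comm]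
    · rw [ev_emb, ev_one, piG_rel]
      simp [eq_comm]
  obtain ⟨x, hx⟩ := hr 0 1 (one_mem _)
  have h2 := (hle h x x).2 ((ev_one _ _ _).2 rfl)
  rw [idem, ev_idem hf hi] at h2
  obtain ⟨-, z, hz⟩ := h2
  rw [ht, hx] at hz
  have := hm' z
  rw [hz] at this
  simpa using this

/-! ### The other direction -/

local notation "Q" => (Con.mk' (invCon hm r w))

theorem Q_vagner (u v : FreeMonoid (B n × Bool)) (h : vagnerRel (B n) u v) : Q u = Q v :=
  (Con.eq _).2 (ConGen.Rel.of _ _ (Or.inl h))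

theorem Q_reg (u : FreeMonoid (B n × Bool)) : Q u * Q (wInv u) * Q u = Q u := by
  rw [← map_mul, ← map_mul]
  exact Q_vagner hm r w _ _ (Or.inl ⟨u, rfl, rfl⟩)

theorem Q_comm (u v : FreeMonoid (B n × Bool)) :
    Q (idem u) * Q (idem v) = Q (idem v) * Q (idem u) := by
  rw [← map_mul, ← map_mul]
  exact Q_vagner hm r w _ _ (Or.inr ⟨v, u, rfl, rfl⟩)

theorem Q_idem (u : FreeMonoid (B n × Bool)) : Q (idem u) * Q (idem u) = Q (idem u) := by
  rw [idem, map_mul, ← mul_assoc, Q_reg]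

theorem Q_right (u : FreeMonoid (B n × Bool)) (y) (h : Q u * y = 1) : Q (idem u) = 1 := by
  calc Q (idem u) = Q u * Q (wInv u) * Q u * y := by
        rw [mul_assoc _ (Q u), h, mul_one, idem, map_mul]
    _ = 1 := by rw [Q_reg, h]

theorem Q_list (L : List (FreeMonoid (B n × Bool))) (y) (h : Q (L.map idem).prod * y = 1) :
    (∀ u ∈ L, Q (idem u) = 1) ∧ y = 1 := by
  induction L with
  | nil => simpa using h
  | cons u L ih =>
    rw [List.map_cons, List.prod_cons, map_mul, mul_assoc] at h
    have hu : Q (idem u) = 1 := by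
      rw [← h]
      nth_rewrite 2 [← Q_idem]
      rw [mul_assoc, h, mul_one]
    rw [hu, one_mul] at h
    obtain ⟨h1, h2⟩ := ih h
    refine ⟨?_, h2⟩
    intro v hv
    rcases List.mem_cons.1 hv with rfl | hv
    · exact hu
    · exact h1 v hv

theorem Q_facts : (∀ i : Fin n, Q (idem (aW i)) = 1) ∧ (∀ i : Fin n, Q (idem (wInv (aW i))) = 1) ∧
    (∀ j : Fin k, Q (idem (tW n * emb (w j) * tWinv n)) = 1) ∧ ∀ i, Q (emb (r i)) = 1 := by
  have h0 : Q (eWord w * emb (r ⟨0, hm⟩)) = 1 :=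
    (Con.eq _).2 (ConGen.Rel.of _ _ (Or.inr (Or.inl ⟨rfl, rfl⟩)))
  have hE : eWord w = (((List.ofFn fun i : Fin n => aW i) ++
    (List.ofFn fun j : Fin k => tW n * emb (w j) * tWinv n) ++
    (List.ofFn fun i : Fin n => wInv (aW i))).map idem).prod := by
    simp only [List.map_append, List.map_ofFn]
    rfl
  rw [map_mul, hE] at h0
  obtain ⟨h1, h2⟩ := Q_list hm r w _ _ h0
  refine ⟨fun i => h1 _ ?_, fun i => h1 _ ?_, fun j => h1 _ ?_, fun i => ?_⟩
  · simp
  · simp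
  · simp
  · by_cases hi : i = ⟨0, hm⟩
    · rw [hi, h2]
    · exact (Con.eq _).2 (ConGen.Rel.of _ _ (Or.inr (Or.inr ⟨i, hi, rfl, rfl⟩)))

theorem Q_emb_congr (u v : FreeMonoid (Fin n × Bool)) (h : piG r u = piG r v) :
    Q (emb u) = Q (emb v) := by
  obtain ⟨h1, h2, -, h4⟩ := Q_facts hm r w
  let f : Fin n → (invCon hm r w).Quotientˣ := fun i =>
    ⟨Q (aW i), Q (wInv (aW i)), by rw [← map_mul]; exact h1 i, by
      have := h2 i
      rwa [idem, wInv_wInv, map_mul] at this⟩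
  have hl : ∀ u : FreeMonoid (Fin n × Bool),
      ((FreeGroup.lift f (FreeGroup.mk (FreeMonoid.toList u)) : (invCon hm r w).Quotientˣ) :
        (invCon hm r w).Quotient) = Q (emb u) := by
    intro u
    induction u using FreeMonoid.inductionOn with
    | one => simp [← FreeGroup.one_eq_mk]
    | of p =>
      obtain ⟨i, s⟩ := p
      cases s
      · simp [f, aW, wInv_of]
        exact (invCon hm r w).refl _
      · simp [f]
        exact (invCon hm r w).refl _
    | mul u v hu hv =>
      rw [FreeMonoid.toList_mul, ← FreeGroup.mul_mk, map_mul, Units.val_mul, hu, hv, map_mul,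
        map_mul]
  have hrel : ∀ x ∈ relsG r, FreeGroup.lift f x = 1 := by
    rintro x ⟨i, rfl⟩
    apply Units.ext
    rw [hl, h4, Units.val_one]
  have := congrArg (fun g => ((PresentedGroup.toGroup hrel g : (invCon hm r w).Quotientˣ) :
        (invCon hm r w).Quotient)) h
  rw [← hl, ← hl]
  exact this

theorem invCon_of_mem (hk : 0 < k) (u : FreeMonoid (Fin n × Bool)) (h : piG r u ∈ subT r w) :
    invCon hm r w (idem (tW n * emb u * tWinv n)) 1 := by
  obtain ⟨-, -, h3, -⟩ := Q_facts hm r w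
  have key : ∃ v, piG r v = piG r u ∧ ∃ y, Q (tW n * emb v * tWinv n) * y = 1 := by
    refine Submonoid.closure_induction (motive := fun g _ =>
      ∃ v, piG r v = g ∧ ∃ y, Q (tW n * emb v * tWinv n) * y = 1) ?_ ?_ ?_ h
    · rintro _ ⟨j, rfl⟩
      refine ⟨w j, rfl, Q (wInv (tW n * emb (w j) * tWinv n)), ?_⟩
      rw [← map_mul]
      exact h3 j
    · refine ⟨1, piG_one r, 1, ?_⟩
      have h0 := h3 ⟨0, hk⟩
      rw [idem, mul_assoc, mul_assoc, map_mul] at h0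
      have := Q_right hm r w _ _ h0
      rw [idem, tW, wInv_of] at this
      simpa [tW, tWinv] using this
    · rintro _ _ _ _ ⟨v1, rfl, y1, h1⟩ ⟨v2, rfl, y2, h2⟩
      refine ⟨v1 * v2, piG_mul r _ _, Q (wInv (emb v2 * tWinv n)) * Q (idem (tWinv n)) *
        Q (emb v2 * tWinv n) * y2 * y1, ?_⟩
      have ha : Q (idem (tWinv n)) = Q (tWinv n) * Q (tW n) := by
        rw [idem, map_mul, tWinv, wInv_of]
        rfl
      have hb : Q (emb v2 * tWinv n) * Q (wInv (emb v2 * tWinv n)) * Q (idem (tWinv n)) *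
          Q (emb v2 * tWinv n) = Q (idem (tWinv n)) * Q (emb v2 * tWinv n) := by
        have := Q_comm hm r w (tWinv n) (emb v2 * tWinv n)
        have h' : Q (emb v2 * tWinv n) * Q (wInv (emb v2 * tWinv n)) =
            Q (idem (emb v2 * tWinv n)) := by
          rw [← map_mul]
          rfl
        rw [h', ← this, ← h', mul_assoc, Q_reg]
      calc _ = Q (tW n) * Q (emb v1) * (Q (emb v2 * tWinv n) * Q (wInv (emb v2 * tWinv n)) *
            Q (idem (tWinv n)) * Q (emb v2 * tWinv n)) * y2 * y1 := by
              simp only [map_mul, mul_assoc]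
        _ = Q (tW n * emb v1 * tWinv n) * (Q (tW n * emb v2 * tWinv n) * y2) * y1 := by
              rw [hb, ha]
              simp only [map_mul, mul_assoc]
        _ = 1 := by rw [h2, mul_one, h1]
  obtain ⟨v, hv, y, hy⟩ := key
  rw [map_mul, map_mul, Q_emb_congr hm r w _ _ hv, ← map_mul, ← map_mul] at hy
  exact (Con.eq _).1 (Q_right hm r w _ _ hy)

end main

theorem primrec_toList {α : Type*} [Primcodable α] :
    Primrec (FreeMonoid.toList : FreeMonoid α → List α) := Primrec.of_equiv

theorem primrec_ofList {α : Type*} [Primcodable α] :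
    Primrec (FreeMonoid.ofList : List α → FreeMonoid α) := Primrec.of_equiv_symm

theorem primrec_fm_mul {α : Type*} [Primcodable α] :
    Primrec₂ (fun u v : FreeMonoid α => u * v) :=
  primrec_ofList.comp (Primrec.list_append.comp (primrec_toList.comp Primrec.fst)
    (primrec_toList.comp Primrec.snd))

theorem primrec_wInv {β : Type*} [Primcodable β] :
    Primrec (wInv : FreeMonoid (β × Bool) → FreeMonoid (β × Bool)) :=
  primrec_ofList.comp (Primrec.list_reverse.comp (Primrec.list_map primrec_toList
    (Primrec.pair (Primrec.fst.comp Primrec.snd)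
      (Primrec.not.comp (Primrec.snd.comp Primrec.snd))).to₂))

theorem primrec_emb {n : ℕ} :
    Primrec (fun u : FreeMonoid (Fin n × Bool) => emb u) :=
  primrec_ofList.comp (Primrec.list_map primrec_toList
    (Primrec.pair (Primrec.sumInl.comp (Primrec.fst.comp Primrec.snd))
      (Primrec.snd.comp Primrec.snd)).to₂)

theorem primrec_red {n : ℕ} :
    Primrec (fun u : FreeMonoid (Fin n × Bool) => idem (tW n * emb u * tWinv n)) := by
  have h : Primrec (fun u : FreeMonoid (Fin n × Bool) => tW n * emb u * tWinv n) :=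
    primrec_fm_mul.comp (primrec_fm_mul.comp (Primrec.const _) primrec_emb) (Primrec.const _)
  exact primrec_fm_mul.comp h (primrec_wInv.comp h)


/-- If the word problem for the inverse monoid `M = Inv⟨B | e·r₁ = 1, r₂ = 1, …, r_m = 1⟩`
is decidable, then the membership problem for `T = ⟨πG w₁, …, πG w_k⟩` within
`G = Gp⟨Fin n | r₁ = 1, …, r_m = 1⟩` is decidable. -/
theorem membership_decidable_of_wordProblem_decidable {n m k : ℕ}
    (hn : 0 < n) (hm : 0 < m) (hk : 0 < k)
    (r : Fin m → FreeMonoid (Fin n × Bool)) (w : Fin k → FreeMonoid (Fin n × Bool))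
    (hWP : ComputablePred
      (fun p : FreeMonoid (B n × Bool) × FreeMonoid (B n × Bool) => invCon hm r w p.1 p.2)) :
    ComputablePred (fun u : FreeMonoid (Fin n × Bool) => piG r u ∈ subT r w) := by
  have hcomp : Computable (fun u : FreeMonoid (Fin n × Bool) =>
      ((idem (tW n * emb u * tWinv n), 1) :
        FreeMonoid (B n × Bool) × FreeMonoid (B n × Bool))) :=
    (Primrec.pair primrec_red (Primrec.const 1)).to_comp
  refine ComputablePred.computable_of_manyOneReducible ⟨_, hcomp, fun u => ?_⟩ hWP
  exact ⟨invCon_of_mem hm r w hk u, mem_of_invCon hm r w u⟩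
end
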